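/- For every κ ≥ 0 and every sequence of nonempty compact sets Θ_p ⊆ {θ ∈ ℝ^p : ‖θ‖₂ ≤ 1}, one has |ξ⁽¹⁾_{n,ψ,κ}(Θ_p) − (ξ⁽²⁾_{n,ψ,κ}(Θ_p))₊| → 0 in probability as n → ∞ with p/n → ψ. In particular |ξ⁽¹⁾_{n,ψ,κ} − (ξ⁽²⁾_{n,ψ,κ})₊| → 0 in probability (taking Θ_p the full unit ball). -/

import Mathlib

open MeasureTheory ProbabilityTheory Real Filter Set Topology

noncomputable section

namespace MaxMargin

/-- The standard Gaussian measure on `ℝ`. -/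
def stdG : Measure ℝ := gaussianReal 0 1

/-- The function `F_κ(c₁,c₂) = (E[((κ − c₁·Y·G − c₂·Z)₊)²])^{1/2}` where `G, Z` are independent
standard Gaussians and, conditionally on `G`, `Y ∈ {+1,−1}` with `P(Y = +1 | G) = f(G)`. -/
def Fk (f : ℝ → ℝ) (κ c₁ c₂ : ℝ) : ℝ :=
  Real.sqrt (∫ g, ∫ z,
    (f g * (max (κ - c₁ * g - c₂ * z) 0) ^ 2
      + (1 - f g) * (max (κ + c₁ * g - c₂ * z) 0) ^ 2) ∂stdG ∂stdG)

/-- Non-degeneracy of `f`: the variable `T = Y·G` satisfies `P(T < x) > 0` and `P(T > x) > 0`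
for every `x ∈ ℝ`. -/
def NonDeg (f : ℝ → ℝ) : Prop :=
  ∀ x : ℝ,
    (0 < ∫ g, (f g * (if g < x then (1:ℝ) else 0)
          + (1 - f g) * (if -g < x then (1:ℝ) else 0)) ∂stdG) ∧
    (0 < ∫ g, (f g * (if x < g then (1:ℝ) else 0)
          + (1 - f g) * (if x < -g then (1:ℝ) else 0)) ∂stdG)


/-- The Euclidean (ℓ²) norm of a finitely-indexed vector. -/
def l2 {ι : Type*} [Fintype ι] (v : ι → ℝ) : ℝ := Real.sqrt (∑ i, v i ^ 2)

/-- Standard Gaussian measure on `ι → ℝ`. -/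
def stdGaussianPi (ι : Type*) [Fintype ι] : Measure (ι → ℝ) :=
  Measure.pi fun _ : ι => stdG

/-- The law of a `{+1,−1}`-valued variable taking the value `+1` with probability `q`. -/
def signBer (q : ℝ) : Measure ℝ :=
  ENNReal.ofReal q • Measure.dirac (1 : ℝ) + ENNReal.ofReal (1 - q) • Measure.dirac (-1 : ℝ)

/-- Projection of `v` orthogonal to the unit vector `w`: `Π_{w⊥}v = v − ⟨w,v⟩w`. -/
def projv {ι : Type*} [Fintype ι] (w v : ι → ℝ) : ι → ℝ :=
  fun j => v j - (∑ k, w k * v k) * w j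

/-- The dual feasible set `{λ : ‖λ‖₂ ≤ 1, yᵢλᵢ ≥ 0 ∀i}`. -/
def lamSet (n : ℕ) (yv : Fin n → ℝ) : Set (Fin n → ℝ) :=
  {lam : Fin n → ℝ | l2 lam ≤ 1 ∧ ∀ i, 0 ≤ yv i * lam i}

/-- `ξ⁽⁰⁾(Θ)` evaluated at the data `(M, y)`:
`min_{θ∈Θ} max_{‖λ‖≤1, y⊙λ≥0} p^{−1/2}·λᵀ(κy − X̄Λ^{1/2}θ)`. -/
def xi0 (n p : ℕ) (κ : ℝ) (Λ : Fin p → ℝ) (Θ : Set (Fin p → ℝ))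
    (M : Fin n → Fin p → ℝ) (yv : Fin n → ℝ) : ℝ :=
  sInf ((fun θ => sSup ((fun lam => (Real.sqrt (p : ℝ))⁻¹ *
      ∑ i, lam i * (κ * yv i - ∑ j, M i j * Real.sqrt (Λ j) * θ j)) '' lamSet n yv)) '' Θ)

/-- `ξ⁽¹⁾(Θ)` evaluated at `(g, h, u, y)`:
`min_{θ∈Θ} max_{‖λ‖≤1, y⊙λ≥0} p^{−1/2}( λᵀ(κy − ⟨Λ^{1/2}w,θ⟩u − ‖Π_{w⊥}Λ^{1/2}θ‖₂h)
+ ‖λ‖₂·gᵀΠ_{w⊥}Λ^{1/2}θ )`. -/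
def xi1 (n p : ℕ) (κ : ℝ) (Λ w : Fin p → ℝ) (Θ : Set (Fin p → ℝ))
    (g : Fin p → ℝ) (h u yv : Fin n → ℝ) : ℝ :=
  sInf ((fun θ => sSup ((fun lam => (Real.sqrt (p : ℝ))⁻¹ *
      ((∑ i, lam i * (κ * yv i - (∑ j, Real.sqrt (Λ j) * w j * θ j) * u i
          - l2 (projv w (fun j => Real.sqrt (Λ j) * θ j)) * h i))
        + l2 lam * ∑ j, g j * projv w (fun j' => Real.sqrt (Λ j') * θ j') j))
      '' lamSet n yv)) '' Θ)

/-- Joint law of `(X̄, y)` in the primary model: `X̄` has i.i.d. `N(0,1)` entries and,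
conditionally on `X̄`, the labels are independent with `P(yᵢ = +1 | X̄) = f(ρ⟨w, x̄ᵢ⟩)`. -/
def mu0 (n p : ℕ) (f : ℝ → ℝ) (ρ : ℝ) (w : Fin p → ℝ) :
    Measure ((Fin n → Fin p → ℝ) × (Fin n → ℝ)) :=
  (Measure.pi fun _ : Fin n => stdGaussianPi (Fin p)).bind fun M =>
    (Measure.pi fun i : Fin n => signBer (f (ρ * ∑ j, w j * M i j))).map fun yv => (M, yv)

/-- Joint law of `(g, h, u, y)` in the auxiliary model: `g, h, u` independent standard
Gaussians and, conditionally on `u`, the labels are independent with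
`P(yᵢ = +1 | u) = f(ρ·uᵢ)`. -/
def mu1 (n p : ℕ) (f : ℝ → ℝ) (ρ : ℝ) :
    Measure ((Fin p → ℝ) × (Fin n → ℝ) × (Fin n → ℝ) × (Fin n → ℝ)) :=
  ((stdGaussianPi (Fin p)).prod
      ((stdGaussianPi (Fin n)).prod (stdGaussianPi (Fin n)))).bind fun ghu =>
    (Measure.pi fun i : Fin n => signBer (f (ρ * ghu.2.2 i))).map fun yv =>
      (ghu.1, ghu.2.1, ghu.2.2, yv)

/-- `ξ⁽²⁾(Θ)` evaluated at `g`: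
`min_{θ∈Θ} [ψ^{−1/2}·F_κ(⟨Λ^{1/2}w,θ⟩, ‖Π_{w⊥}Λ^{1/2}θ‖₂) + p^{−1/2}·gᵀΠ_{w⊥}Λ^{1/2}θ]`. -/
def xi2 (p : ℕ) (ψ κ : ℝ) (fρ : ℝ → ℝ) (Λ w : Fin p → ℝ) (Θ : Set (Fin p → ℝ))
    (g : Fin p → ℝ) : ℝ :=
  sInf ((fun θ =>
      (Real.sqrt ψ)⁻¹ * Fk fρ κ (∑ j, Real.sqrt (Λ j) * w j * θ j)
          (l2 (projv w fun j => Real.sqrt (Λ j) * θ j))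
        + (Real.sqrt (p : ℝ))⁻¹ *
            ∑ j, g j * projv w (fun j' => Real.sqrt (Λ j') * θ j') j) '' Θ)


lemma l2_sq {ι : Type*} [Fintype ι] (v : ι → ℝ) : l2 v ^ 2 = ∑ i, v i ^ 2 :=
  Real.sq_sqrt (Finset.sum_nonneg fun _ _ => sq_nonneg _)

lemma l2_nonneg {ι : Type*} [Fintype ι] (v : ι → ℝ) : 0 ≤ l2 v := Real.sqrt_nonneg _

lemma sum_mul_le_l2 {ι : Type*} [Fintype ι] (v w : ι → ℝ) : ∑ i, v i * w i ≤ l2 v * l2 w :=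
  Real.sum_mul_le_sqrt_mul_sqrt _ _ _

lemma abs_sum_mul_le_l2 {ι : Type*} [Fintype ι] (v w : ι → ℝ) :
    |∑ i, v i * w i| ≤ l2 v * l2 w := by
  rw [abs_le]
  refine ⟨?_, sum_mul_le_l2 v w⟩
  have h := sum_mul_le_l2 (fun i => - v i) w
  have e : l2 (fun i => - v i) = l2 v := by simp [l2]
  rw [e] at h
  simp only [neg_mul, Finset.sum_neg_distrib] at h
  linarith

lemma l2_eq_norm {ι : Type*} [Fintype ι] (v : ι → ℝ) : l2 v = ‖WithLp.toLp 2 v‖ := by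
  rw [EuclideanSpace.norm_eq]; simp [l2]

lemma abs_l2_sub_le {ι : Type*} [Fintype ι] (v w : ι → ℝ) :
    |l2 v - l2 w| ≤ l2 (fun i => v i - w i) := by
  rw [l2_eq_norm, l2_eq_norm, l2_eq_norm]
  exact abs_norm_sub_norm_le (WithLp.toLp 2 v) (WithLp.toLp 2 w)

lemma inner_sup (n : ℕ) (y a : Fin n → ℝ) (hy : ∀ i, y i = 1 ∨ y i = -1) (b s D : ℝ)
    (hs : 0 ≤ s) (hD : 0 ≤ D) (i0 : Fin n) (hi0 : -D ≤ y i0 * a i0) :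
    sSup ((fun lam : Fin n → ℝ => s * ((∑ i, lam i * a i) + l2 lam * b)) '' lamSet n y)
        ≤ s * max (l2 (fun i => max (y i * a i) 0) + b) 0 ∧
    s * max (l2 (fun i => max (y i * a i) 0) + b) 0 - s * D ≤
      sSup ((fun lam : Fin n → ℝ => s * ((∑ i, lam i * a i) + l2 lam * b)) '' lamSet n y) ∧
    0 ≤ sSup ((fun lam : Fin n → ℝ => s * ((∑ i, lam i * a i) + l2 lam * b)) '' lamSet n y) := by
  have hy2 : ∀ i, y i * y i = 1 := fun i => by rcases hy i with h | h <;> simp [h]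
  set N := l2 (fun i => max (y i * a i) 0) with hN
  have hub : ∀ x ∈ (fun lam : Fin n → ℝ => s * ((∑ i, lam i * a i) + l2 lam * b)) '' lamSet n y,
      x ≤ s * max (N + b) 0 := by
    rintro _ ⟨lam, ⟨hl, hpos⟩, rfl⟩
    refine mul_le_mul_of_nonneg_left ?_ hs
    have h1 : ∑ i, lam i * a i ≤ l2 lam * N := by
      have : l2 lam = l2 (fun i => y i * lam i) := by
        unfold l2; congr 1; refine Finset.sum_congr rfl fun i _ => ?_
        rw [mul_pow, sq (y i), hy2, one_mul]
      rw [this]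
      refine le_trans (Finset.sum_le_sum fun i _ => ?_)
        (sum_mul_le_l2 (fun i => y i * lam i) (fun i => max (y i * a i) 0))
      have : lam i * a i = (y i * lam i) * (y i * a i) := by
        linear_combination (-(lam i * a i)) * hy2 i
      rw [this]
      exact mul_le_mul_of_nonneg_left (le_max_left _ _) (hpos i)
    have h2 : l2 lam * (N + b) ≤ max (N + b) 0 := by
      rcases le_total 0 (N + b) with h | h
      · rw [max_eq_left h]; nlinarith [l2_nonneg lam]
      · rw [max_eq_right h]; nlinarith [l2_nonneg lam]
    linarith
  have hbdd : BddAbove ((fun lam : Fin n → ℝ => s * ((∑ i, lam i * a i) + l2 lam * b))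
      '' lamSet n y) := ⟨_, hub⟩
  have h0 : 0 ≤ sSup ((fun lam : Fin n → ℝ => s * ((∑ i, lam i * a i) + l2 lam * b))
      '' lamSet n y) := by
    refine le_csSup hbdd ⟨fun _ => 0, ⟨by simp [l2], by simp⟩, by simp [l2]⟩
  refine ⟨csSup_le ⟨_, ⟨fun _ => 0, ⟨by simp [l2], by simp⟩, rfl⟩⟩ hub, ?_, h0⟩
  rcases le_total (N + b) 0 with h | h
  · rw [max_eq_right h]; nlinarith
  rw [max_eq_left h]
  rcases (l2_nonneg (fun i => max (y i * a i) 0)).lt_or_eq with hpos | hzero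
  · rw [← hN] at hpos
    have hl : l2 (fun i => y i * max (y i * a i) 0 / N) = 1 := by
      have : ∑ i, (y i * max (y i * a i) 0 / N) ^ 2 = 1 := by
        have e : ∀ i, (y i * max (y i * a i) 0 / N) ^ 2 = (max (y i * a i) 0) ^ 2 / N ^ 2 := by
          intro i; rw [div_pow, mul_pow, sq (y i), hy2, one_mul]
        simp_rw [e]
        rw [← Finset.sum_div, ← l2_sq (fun i => max (y i * a i) 0), ← hN]
        exact div_self (by positivity)
      rw [l2, this, Real.sqrt_one]
    have hS : ∑ i, (y i * max (y i * a i) 0 / N) * a i = N := by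
      have e : ∀ i, (y i * max (y i * a i) 0 / N) * a i = (max (y i * a i) 0) ^ 2 / N := by
        intro i
        have : max (y i * a i) 0 * (y i * a i) = (max (y i * a i) 0) ^ 2 := by
          rcases le_total (y i * a i) 0 with h | h
          · rw [max_eq_right h]; simp
          · rw [max_eq_left h]; ring
        rw [← this]; ring
      simp_rw [e]
      rw [← Finset.sum_div, ← l2_sq (fun i => max (y i * a i) 0), ← hN]
      field_simp
    have : s * (N + b) ≤ sSup ((fun lam : Fin n → ℝ => s * ((∑ i, lam i * a i) + l2 lam * b))
        '' lamSet n y) := by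
      refine le_csSup hbdd ⟨fun i => y i * max (y i * a i) 0 / N, ⟨hl.le, fun i => ?_⟩, ?_⟩
      · have : y i * (y i * max (y i * a i) 0 / N) = max (y i * a i) 0 / N := by
          rw [← mul_div_assoc, ← mul_assoc, hy2, one_mul]
        rw [this]; positivity
      · simp only [hl, hS, one_mul]
    nlinarith
  · rw [← hN] at hzero
    have hl : l2 (fun i => if i = i0 then y i0 else 0) = 1 := by
      rw [l2]
      have : ∑ i, (if i = i0 then y i0 else 0) ^ 2 = 1 := by
        simp [ite_pow, sq, hy2]
      rw [this, Real.sqrt_one]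
    have hS : ∑ i, (if i = i0 then y i0 else 0) * a i = y i0 * a i0 := by
      simp
    have : s * (y i0 * a i0 + b) ≤
        sSup ((fun lam : Fin n → ℝ => s * ((∑ i, lam i * a i) + l2 lam * b))
        '' lamSet n y) := by
      refine le_csSup hbdd ⟨fun i => if i = i0 then y i0 else 0, ⟨hl.le, fun i => ?_⟩, ?_⟩
      · by_cases h : i = i0
        · subst h; simp [hy2]
        · simp [h]
      · simp only [hl, hS, one_mul]
    nlinarith

/-- From pointwise comparison to comparison of minima. -/
lemma sInf_compare {α : Type*} (Θ : Set α) (hne : Θ.Nonempty) (A B : α → ℝ) (ε : ℝ)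
    (hA : ∀ θ ∈ Θ, 0 ≤ A θ) (hB : BddBelow (B '' Θ))
    (h : ∀ θ ∈ Θ, |A θ - max (B θ) 0| ≤ ε) :
    |sInf (A '' Θ) - max (sInf (B '' Θ)) 0| ≤ ε := by
  have hAb : BddBelow (A '' Θ) := ⟨0, by rintro _ ⟨θ, hθ, rfl⟩; exact hA θ hθ⟩
  rw [abs_le]
  constructor
  · have : max (sInf (B '' Θ)) 0 - ε ≤ sInf (A '' Θ) := by
      refine le_csInf (hne.image _) ?_
      rintro _ ⟨θ, hθ, rfl⟩
      have h1 := (abs_le.1 (h θ hθ)).1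
      have h2 : sInf (B '' Θ) ≤ B θ := csInf_le hB ⟨θ, hθ, rfl⟩
      have := max_le_max_right 0 h2
      linarith
    linarith
  · refine le_of_forall_pos_le_add fun η hη => ?_
    obtain ⟨_, ⟨θ, hθ, rfl⟩, hlt⟩ := Real.lt_sInf_add_pos (hne.image B) hη
    have h1 := (abs_le.1 (h θ hθ)).2
    have h2 : sInf (A '' Θ) ≤ A θ := csInf_le hAb ⟨θ, hθ, rfl⟩
    have h3 : max (B θ) 0 ≤ max (sInf (B '' Θ)) 0 + η := by
      refine max_le ?_ ?_
      · have := le_max_left (sInf (B '' Θ)) 0; linarith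
      · have := le_max_right (sInf (B '' Θ)) 0; linarith
    linarith

lemma l2_projv_le {ι : Type*} [Fintype ι] (w v : ι → ℝ) (hw : l2 w = 1) :
    l2 (projv w v) ≤ l2 v := by
  have hw2 : ∑ i, w i ^ 2 = 1 := by rw [← l2_sq, hw]; norm_num
  refine Real.sqrt_le_sqrt ?_
  have : ∑ i, (projv w v i) ^ 2 = ∑ i, v i ^ 2 - (∑ k, w k * v k) ^ 2 := by
    have e : ∀ i, (projv w v i) ^ 2 = v i ^ 2 - 2 * (∑ k, w k * v k) * (w i * v i)
        + (∑ k, w k * v k) ^ 2 * w i ^ 2 := by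
      intro i; unfold projv; ring
    simp_rw [e]
    rw [Finset.sum_add_distrib, Finset.sum_sub_distrib, ← Finset.mul_sum, ← Finset.mul_sum, hw2]
    ring
  rw [this]
  nlinarith [sq_nonneg (∑ k, w k * v k)]

lemma l2_scaled_le {p : ℕ} (Λ θ : Fin p → ℝ) (C : ℝ) (hΛ : ∀ j, 0 ≤ Λ j ∧ Λ j ≤ C)
    (hC : 0 ≤ C) (hθ : l2 θ ≤ 1) : l2 (fun j => Real.sqrt (Λ j) * θ j) ≤ Real.sqrt C := by
  refine Real.sqrt_le_sqrt ?_
  have : ∑ i, θ i ^ 2 ≤ 1 := by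
    rw [← l2_sq]; nlinarith [l2_nonneg θ]
  calc ∑ i, (Real.sqrt (Λ i) * θ i) ^ 2 ≤ ∑ i, C * θ i ^ 2 := by
        refine Finset.sum_le_sum fun i _ => ?_
        rw [mul_pow, Real.sq_sqrt (hΛ i).1]
        exact mul_le_mul_of_nonneg_right (hΛ i).2 (sq_nonneg _)
    _ = C * ∑ i, θ i ^ 2 := by rw [Finset.mul_sum]
    _ ≤ C := by nlinarith

/-- Deterministic comparison. -/
lemma xi_compare (n p : ℕ) (hn : 0 < n) (ψ κ C L ε : ℝ) (hκ : 0 ≤ κ) (hC : 0 ≤ C)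
    (fρ : ℝ → ℝ) (Λ w : Fin p → ℝ) (hΛ : ∀ j, 0 ≤ Λ j ∧ Λ j ≤ C) (hw : l2 w = 1)
    (Θ : Set (Fin p → ℝ)) (hne : Θ.Nonempty) (hsub : ∀ θ ∈ Θ, l2 θ ≤ 1)
    (g : Fin p → ℝ) (h u y : Fin n → ℝ) (hy : ∀ i, y i = 1 ∨ y i = -1)
    (hL : ∑ i, (u i ^ 2 + h i ^ 2) ≤ n * L)
    (hunif : ∀ c₁ c₂ : ℝ, |c₁| ≤ Real.sqrt C → |c₂| ≤ Real.sqrt C →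
      |(Real.sqrt (p : ℝ))⁻¹ * l2 (fun i => max (κ - c₁ * (y i * u i) - c₂ * (y i * h i)) 0)
        - (Real.sqrt ψ)⁻¹ * Fk fρ κ c₁ c₂| ≤ ε) :
    |xi1 n p κ Λ w Θ g h u y - max (xi2 p ψ κ fρ Λ w Θ g) 0|
      ≤ ε + (Real.sqrt (p : ℝ))⁻¹ * (2 * Real.sqrt C * Real.sqrt L) := by
  have hs : 0 ≤ (Real.sqrt (p : ℝ))⁻¹ := inv_nonneg.2 (Real.sqrt_nonneg _)
  have hy2 : ∀ i, y i * y i = 1 := fun i => by rcases hy i with h | h <;> simp [h]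
  -- an index with small noise
  obtain ⟨i0, hi0⟩ : ∃ i0, u i0 ^ 2 + h i0 ^ 2 ≤ L := by
    by_contra! hcon
    have : ∑ i : Fin n, L < ∑ i, (u i ^ 2 + h i ^ 2) :=
      Finset.sum_lt_sum_of_nonempty ⟨⟨0, hn⟩, Finset.mem_univ _⟩ fun i _ => hcon i
    simp at this
    linarith
  have hu0 : |u i0| ≤ Real.sqrt L := Real.abs_le_sqrt (by nlinarith [sq_nonneg (h i0)])
  have hh0 : |h i0| ≤ Real.sqrt L := Real.abs_le_sqrt (by nlinarith [sq_nonneg (u i0)])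
  have hc1 : ∀ θ ∈ Θ, |∑ j, Real.sqrt (Λ j) * w j * θ j| ≤ Real.sqrt C := by
    intro θ hθ
    have := abs_sum_mul_le_l2 w (fun j => Real.sqrt (Λ j) * θ j)
    rw [hw, one_mul] at this
    have e : ∑ j, Real.sqrt (Λ j) * w j * θ j = ∑ j, w j * (Real.sqrt (Λ j) * θ j) :=
      Finset.sum_congr rfl fun j _ => by ring
    rw [e]
    exact this.trans (l2_scaled_le Λ θ C hΛ hC (hsub θ hθ))
  have hc2 : ∀ θ ∈ Θ, l2 (projv w fun j => Real.sqrt (Λ j) * θ j) ≤ Real.sqrt C := fun θ hθ =>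
    (l2_projv_le w _ hw).trans (l2_scaled_le Λ θ C hΛ hC (hsub θ hθ))
  unfold xi1 xi2
  have key := fun θ (hθ : θ ∈ Θ) => inner_sup n y
    (fun i => κ * y i - (∑ j, Real.sqrt (Λ j) * w j * θ j) * u i
          - l2 (projv w (fun j => Real.sqrt (Λ j) * θ j)) * h i) hy
    (∑ j, g j * projv w (fun j' => Real.sqrt (Λ j') * θ j') j) (Real.sqrt (p : ℝ))⁻¹
    (2 * Real.sqrt C * Real.sqrt L) hs (by positivity) i0 (by
      have a1 := hc1 θ hθ
      have a2 := hc2 θ hθ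
      have a3 := l2_nonneg (projv w fun j => Real.sqrt (Λ j) * θ j)
      set c₁ := ∑ j, Real.sqrt (Λ j) * w j * θ j
      set c₂ := l2 (projv w fun j => Real.sqrt (Λ j) * θ j)
      have yabs : |y i0| = 1 := by rcases hy i0 with h | h <;> simp [h]
      have b1 : |c₁ * (y i0 * u i0)| ≤ Real.sqrt C * Real.sqrt L := by
        rw [abs_mul, abs_mul, yabs, one_mul]
        exact mul_le_mul a1 hu0 (abs_nonneg _) (Real.sqrt_nonneg _)
      have b2 : |c₂ * (y i0 * h i0)| ≤ Real.sqrt C * Real.sqrt L := by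
        rw [abs_mul, abs_mul, yabs, one_mul, abs_of_nonneg a3]
        exact mul_le_mul a2 hh0 (abs_nonneg _) (Real.sqrt_nonneg _)
      have e : y i0 * (κ * y i0 - c₁ * u i0 - c₂ * h i0)
          = κ - c₁ * (y i0 * u i0) - c₂ * (y i0 * h i0) := by
        linear_combination κ * hy2 i0
      rw [e]
      have := (abs_le.1 b1).2
      have := (abs_le.1 b2).2
      linarith)
  refine sInf_compare Θ hne _ _ _ (fun θ hθ => (key θ hθ).2.2) ?_ ?_
  · refine ⟨-((Real.sqrt (p : ℝ))⁻¹ * (l2 g * Real.sqrt C)), ?_⟩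
    rintro _ ⟨θ, hθ, rfl⟩
    have b1 : 0 ≤ (Real.sqrt ψ)⁻¹ * Fk fρ κ (∑ j, Real.sqrt (Λ j) * w j * θ j)
          (l2 (projv w fun j => Real.sqrt (Λ j) * θ j)) :=
      mul_nonneg (inv_nonneg.2 (Real.sqrt_nonneg _)) (Real.sqrt_nonneg _)
    have b2 := (abs_le.1 (abs_sum_mul_le_l2 g (projv w fun j => Real.sqrt (Λ j) * θ j))).1
    have b3 := mul_le_mul_of_nonneg_left (hc2 θ hθ) (l2_nonneg g)
    have b4 := mul_le_mul_of_nonneg_left (show -(l2 g * Real.sqrt C) ≤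
      ∑ j, g j * projv w (fun j => Real.sqrt (Λ j) * θ j) j by linarith) hs
    simp only
    linarith
  · intro θ hθ
    obtain ⟨k1, k2, -⟩ := key θ hθ
    have hU := hunif _ _ (hc1 θ hθ) (show
      |l2 (projv w fun j => Real.sqrt (Λ j) * θ j)| ≤ Real.sqrt C by
        rw [abs_of_nonneg (l2_nonneg _)]; exact hc2 θ hθ)
    set c₁ := ∑ j, Real.sqrt (Λ j) * w j * θ j
    set c₂ := l2 (projv w fun j => Real.sqrt (Λ j) * θ j)
    set b := ∑ j, g j * projv w (fun j => Real.sqrt (Λ j) * θ j) j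
    have e : (fun i => max (y i * (κ * y i - c₁ * u i - c₂ * h i)) 0)
        = fun i => max (κ - c₁ * (y i * u i) - c₂ * (y i * h i)) 0 := by
      funext i; congr 1; linear_combination κ * hy2 i
    rw [e] at k1 k2
    set N := l2 fun i => max (κ - c₁ * (y i * u i) - c₂ * (y i * h i)) 0
    have e2 : (Real.sqrt (p : ℝ))⁻¹ * max (N + b) 0
        = max ((Real.sqrt (p : ℝ))⁻¹ * N + (Real.sqrt (p : ℝ))⁻¹ * b) 0 := by
      rw [mul_max_of_nonneg _ _ hs, mul_add, mul_zero]
    rw [e2] at k1 k2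
    have e3 := abs_max_sub_max_le_abs ((Real.sqrt (p : ℝ))⁻¹ * N + (Real.sqrt (p : ℝ))⁻¹ * b)
      ((Real.sqrt ψ)⁻¹ * Fk fρ κ c₁ c₂ + (Real.sqrt (p : ℝ))⁻¹ * b) 0
    rw [add_sub_add_right_eq_sub] at e3
    have e4 := abs_le.1 (e3.trans hU)
    have e5 : 0 ≤ (Real.sqrt (p : ℝ))⁻¹ * (2 * Real.sqrt C * Real.sqrt L) := by positivity
    rw [abs_le]
    constructor <;> linarith [e4.1, e4.2]



instance : IsProbabilityMeasure stdG := by unfold stdG; infer_instance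

instance (q : ℝ) : IsFiniteMeasure (signBer q) := by
  constructor
  simp [signBer]

/-- Law of `(h, u, y)` for one sample. -/
def nuM (f : ℝ → ℝ) (ρ : ℝ) : Measure (ℝ × ℝ × ℝ) :=
  ((stdG.prod stdG).withDensity (fun x => ENNReal.ofReal (f (ρ * x.2)))).map
      (fun x => (x.1, x.2, (1 : ℝ)))
  + ((stdG.prod stdG).withDensity (fun x => ENNReal.ofReal (1 - f (ρ * x.2)))).map
      (fun x => (x.1, x.2, (-1 : ℝ)))

lemma lintegral_nuM (f : ℝ → ℝ) (hf : Continuous f) (ρ : ℝ) (φ : ℝ × ℝ × ℝ → ENNReal)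
    (hφ : Measurable φ) :
    ∫⁻ z, φ z ∂(nuM f ρ) = ∫⁻ x, (ENNReal.ofReal (f (ρ * x.2)) * φ (x.1, x.2, 1)
      + ENNReal.ofReal (1 - f (ρ * x.2)) * φ (x.1, x.2, -1)) ∂(stdG.prod stdG) := by
  have m1 : Measurable fun x : ℝ × ℝ => ENNReal.ofReal (f (ρ * x.2)) := by fun_prop
  have m2 : Measurable fun x : ℝ × ℝ => ENNReal.ofReal (1 - f (ρ * x.2)) := by fun_prop
  have m3 : Measurable fun x : ℝ × ℝ => φ (x.1, x.2, 1) := hφ.comp (by fun_prop)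
  have m4 : Measurable fun x : ℝ × ℝ => φ (x.1, x.2, -1) := hφ.comp (by fun_prop)
  rw [nuM, lintegral_add_measure, lintegral_map hφ (by fun_prop), lintegral_map hφ (by fun_prop),
    lintegral_withDensity_eq_lintegral_mul _ m1 m3, lintegral_withDensity_eq_lintegral_mul _ m2 m4,
    ← lintegral_add_left (m1.mul m3)]
  rfl

lemma nuM_apply (f : ℝ → ℝ) (hf : Continuous f) (ρ : ℝ) (s : Set (ℝ × ℝ × ℝ))
    (hs : MeasurableSet s) :
    nuM f ρ s = ∫⁻ x, signBer (f (ρ * x.2)) {y | (x.1, x.2, y) ∈ s} ∂(stdG.prod stdG) := by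
  rw [← lintegral_indicator_one hs, lintegral_nuM f hf ρ _ (measurable_one.indicator hs)]
  refine lintegral_congr fun x => ?_
  have hm : MeasurableSet {y | (x.1, x.2, y) ∈ s} := by
    have : Measurable fun y : ℝ => (x.1, x.2, y) := by fun_prop
    exact this hs
  simp only [signBer, Measure.add_apply, Measure.smul_apply, smul_eq_mul,
    Measure.dirac_apply' _ hm]
  rfl

lemma isProb_nuM (f : ℝ → ℝ) (hf : Continuous f) (hf01 : ∀ x, f x ∈ Set.Icc (0:ℝ) 1) (ρ : ℝ) :
    IsProbabilityMeasure (nuM f ρ) := by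
  constructor
  rw [nuM_apply f hf ρ _ MeasurableSet.univ]
  have : ∀ x : ℝ × ℝ, signBer (f (ρ * x.2)) {y | (x.1, x.2, y) ∈ (univ : Set (ℝ × ℝ × ℝ))} = 1 := by
    intro x
    have h := hf01 (ρ * x.2)
    simp only [signBer, mem_univ, Set.ofPred_true, Measure.add_apply, Measure.smul_apply, smul_eq_mul,
      measure_univ, mul_one]
    rw [← ENNReal.ofReal_add h.1 (by linarith [h.2])]
    simp
  rw [lintegral_congr this]
  simp

/-- The samples `(hᵢ, uᵢ, yᵢ)` as a function of the data. -/
def smp (n p : ℕ) (q : (Fin p → ℝ) × (Fin n → ℝ) × (Fin n → ℝ) × (Fin n → ℝ)) :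
    Fin n → ℝ × ℝ × ℝ := fun i => (q.2.1 i, q.2.2.1 i, q.2.2.2 i)

lemma measurable_smp (n p : ℕ) : Measurable (smp n p) := by
  unfold smp; fun_prop

lemma lintegral_prod_pi {n : ℕ} {X : Type*} [MeasurableSpace X] (μ : Measure X)
    [IsProbabilityMeasure μ] (k : Fin n → X → ENNReal) (hk : ∀ i, Measurable (k i)) :
    ∫⁻ x, ∏ i, k i (x i) ∂(Measure.pi fun _ : Fin n => μ) = ∏ i, ∫⁻ x, k i x ∂μ := by
  have hind : iIndepFun (fun i (x : Fin n → X) => k i (x i)) (Measure.pi fun _ : Fin n => μ) :=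
    iIndepFun_pi (X := k) (fun i => (hk i).aemeasurable)
  have := lintegral_prod_eq_prod_lintegral_of_indepFun Finset.univ
    (fun i (x : Fin n → X) => k i (x i)) hind (fun i => (hk i).comp (measurable_pi_apply i))
  rw [this]
  refine Finset.prod_congr rfl fun i _ => ?_
  exact (measurePreserving_eval (fun _ : Fin n => μ) i).lintegral_comp (hk i)

lemma measurable_signBer_slice (f : ℝ → ℝ) (hf : Continuous f) (ρ : ℝ) (s : Set (ℝ × ℝ × ℝ))
    (hs : MeasurableSet s) :
    Measurable fun x : ℝ × ℝ => signBer (f (ρ * x.2)) {y | (x.1, x.2, y) ∈ s} := by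
  have e : (fun x : ℝ × ℝ => signBer (f (ρ * x.2)) {y | (x.1, x.2, y) ∈ s}) =
      fun x => ENNReal.ofReal (f (ρ * x.2)) * s.indicator 1 (x.1, x.2, (1:ℝ))
      + ENNReal.ofReal (1 - f (ρ * x.2)) * s.indicator 1 (x.1, x.2, (-1:ℝ)) := by
    funext x
    have hm : MeasurableSet {y | (x.1, x.2, y) ∈ s} := by
      have : Measurable fun y : ℝ => (x.1, x.2, y) := by fun_prop
      exact this hs
    simp only [signBer, Measure.add_apply, Measure.smul_apply, smul_eq_mul,
      Measure.dirac_apply' _ hm]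
    rfl
  rw [e]
  have m : Measurable (s.indicator (1 : ℝ × ℝ × ℝ → ENNReal)) := measurable_one.indicator hs
  have m3 : Measurable fun x : ℝ × ℝ => s.indicator (1 : ℝ × ℝ × ℝ → ENNReal) (x.1, x.2, 1) :=
    m.comp (by fun_prop)
  have m4 : Measurable fun x : ℝ × ℝ => s.indicator (1 : ℝ × ℝ × ℝ → ENNReal) (x.1, x.2, -1) :=
    m.comp (by fun_prop)
  fun_prop

lemma mu1_smp_le (n p : ℕ) (f : ℝ → ℝ) (hf : Continuous f)
    (hf01 : ∀ x, f x ∈ Set.Icc (0:ℝ) 1) (ρ : ℝ) (B : Set (Fin n → ℝ × ℝ × ℝ))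
    (hB : MeasurableSet B) :
    mu1 n p f ρ (smp n p ⁻¹' B) ≤ Measure.pi (fun _ : Fin n => nuM f ρ) B := by
  have := isProb_nuM f hf hf01 ρ
  by_cases hae : AEMeasurable (fun ghu : (Fin p → ℝ) × (Fin n → ℝ) × (Fin n → ℝ) =>
    (Measure.pi fun i : Fin n => signBer (f (ρ * ghu.2.2 i))).map fun yv =>
      (ghu.1, ghu.2.1, ghu.2.2, yv)) ((stdGaussianPi (Fin p)).prod
      ((stdGaussianPi (Fin n)).prod (stdGaussianPi (Fin n))))
  swap
  · rw [mu1, Measure.bind, Measure.map_of_not_aemeasurable hae]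
    simp
  have : Measure.pi (fun _ : Fin n => nuM f ρ) = (mu1 n p f ρ).map (smp n p) := by
    refine Measure.pi_eq fun s hs => ?_
    have hS : MeasurableSet (Set.pi univ s) := MeasurableSet.univ_pi hs
    rw [Measure.map_apply (measurable_smp n p) hS, mu1,
      Measure.bind_apply (measurable_smp n p hS) hae]
    have : IsProbabilityMeasure (stdGaussianPi (Fin p)) := by unfold stdGaussianPi; infer_instance
    have : IsProbabilityMeasure (stdGaussianPi (Fin n)) := by unfold stdGaussianPi; infer_instance
    have mk := fun i => measurable_signBer_slice f hf ρ (s i) (hs i)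
    have hnu := fun i => nuM_apply f hf ρ (s i) (hs i)
    have e : ∀ ghu : (Fin p → ℝ) × (Fin n → ℝ) × (Fin n → ℝ),
        ((Measure.pi fun i : Fin n => signBer (f (ρ * ghu.2.2 i))).map fun yv =>
          (ghu.1, ghu.2.1, ghu.2.2, yv)) (smp n p ⁻¹' Set.pi univ s)
        = ∏ i, (fun i (x : ℝ × ℝ) => signBer (f (ρ * x.2)) {y | (x.1, x.2, y) ∈ s i}) i
            (ghu.2.1 i, ghu.2.2 i) := by
      intro ghu
      rw [Measure.map_apply (by fun_prop) (measurable_smp n p hS)]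
      have : ((fun yv : Fin n → ℝ => (ghu.1, ghu.2.1, ghu.2.2, yv)) ⁻¹' (smp n p ⁻¹' Set.pi univ s))
          = Set.pi univ (fun i => {y | (ghu.2.1 i, ghu.2.2 i, y) ∈ s i}) := by
        ext y
        simp [smp, Set.mem_pi]
      rw [this, Measure.pi_pi]
    rw [lintegral_congr e]
    clear e
    have hk : ∃ k : Fin n → ℝ × ℝ → ENNReal,
        k = fun i (x : ℝ × ℝ) => signBer (f (ρ * x.2)) {y | (x.1, x.2, y) ∈ s i} := ⟨_, rfl⟩
    obtain ⟨k, hk⟩ := hk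
    rw [← hk]
    replace mk : ∀ i, Measurable (k i) := by rw [hk]; exact mk
    have hnu' : ∀ i, nuM f ρ (s i) = ∫⁻ x, k i x ∂(stdG.prod stdG) := by rw [hk]; exact hnu
    clear hnu hk
    have mG : Measurable fun hu : (Fin n → ℝ) × (Fin n → ℝ) =>
        ∏ i, k i (hu.1 i, hu.2 i) := by
      refine Finset.measurable_prod _ fun i _ => ?_
      exact (mk i).comp (show Measurable fun hu : (Fin n → ℝ) × (Fin n → ℝ) => (hu.1 i, hu.2 i)
        by fun_prop)
    have s1 := (measurePreserving_snd (μ := stdGaussianPi (Fin p))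
      (ν := (stdGaussianPi (Fin n)).prod (stdGaussianPi (Fin n)))).lintegral_comp mG
    rw [s1]
    have s2 := (measurePreserving_arrowProdEquivProdArrow ℝ ℝ (Fin n) (fun _ => stdG)
      (fun _ => stdG)).lintegral_comp mG
    unfold stdGaussianPi
    rw [← s2]
    have s3 := lintegral_prod_pi (stdG.prod stdG) k mk
    simp_rw [hnu']
    rw [← s3]
    rfl
  rw [this, Measure.map_apply (measurable_smp n p) hB]



lemma lln {X : Type*} [MeasurableSpace X] (ν : Measure X) [IsProbabilityMeasure ν]
    (φ : X → ℝ) (hφ : MemLp φ 2 ν) (n : ℕ) (hn : 0 < n) (δ : ℝ) (hδ : 0 < δ) :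
    Measure.pi (fun _ : Fin n => ν) {x | δ ≤ |(∑ i, φ (x i)) / n - ∫ z, φ z ∂ν|}
      ≤ ENNReal.ofReal ((∫ z, φ z ^ 2 ∂ν) / (n * δ ^ 2)) := by
  have hn' : (0:ℝ) < n := Nat.cast_pos.2 hn
  have hmem : ∀ i : Fin n, MemLp (fun x : Fin n → X => φ (x i)) 2 (Measure.pi fun _ => ν) :=
    fun i => hφ.comp_measurePreserving (measurePreserving_eval (fun _ : Fin n => ν) i)
  have hS : MemLp (∑ i, fun x : Fin n → X => φ (x i)) 2 (Measure.pi fun _ => ν) :=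
    memLp_finsetSum' _ fun i _ => hmem i
  have hmean : ∫ x, (∑ i, fun x : Fin n → X => φ (x i)) x ∂(Measure.pi fun _ : Fin n => ν)
      = n * ∫ z, φ z ∂ν := by
    simp only [Finset.sum_apply]
    rw [integral_finsetSum _ fun i _ => (hmem i).integrable (by norm_num)]
    have : ∀ i : Fin n, ∫ x : Fin n → X, φ (x i) ∂(Measure.pi fun _ => ν) = ∫ z, φ z ∂ν := by
      intro i
      have hm := (measurePreserving_eval (fun _ : Fin n => ν) i)
      conv_rhs => rw [← hm.map_eq]
      rw [integral_map hm.measurable.aemeasurable]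
      rw [hm.map_eq]; exact hφ.1
    simp [this]
  have hvar := variance_sum_pi (μ := fun _ : Fin n => ν) (X := fun _ => φ) (fun _ => hφ)
  have cheb := meas_ge_le_variance_div_sq hS (mul_pos hn' hδ)
  rw [hmean, hvar] at cheb
  refine le_trans (le_of_eq ?_) (cheb.trans (ENNReal.ofReal_le_ofReal ?_))
  · congr 1
    ext x
    simp only [Set.mem_ofPred_eq, Finset.sum_apply]
    have : (∑ i, φ (x i)) - n * ∫ z, φ z ∂ν = n * ((∑ i, φ (x i)) / n - ∫ z, φ z ∂ν) := by
      field_simp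
    rw [this, abs_mul, abs_of_pos hn', mul_le_mul_iff_right₀ hn']
  · simp only [Finset.sum_const, Finset.card_univ, Fintype.card_fin, nsmul_eq_mul]
    have hv : Var[φ; ν] ≤ ∫ z, φ z ^ 2 ∂ν := variance_le_expectation_sq hφ.1
    rw [div_le_div_iff₀ (by positivity) (by positivity)]
    have : 0 ≤ (n:ℝ) * (n * δ ^ 2) := by positivity
    nlinarith [mul_le_mul_of_nonneg_left hv this]

lemma nu_int (f : ℝ → ℝ) (hf : Continuous f) (hf01 : ∀ x, f x ∈ Set.Icc (0:ℝ) 1) (ρ : ℝ)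
    (φ : ℝ × ℝ × ℝ → ℝ) (hφ : Measurable φ) (W : ℝ × ℝ → ℝ)
    (hW : Integrable W (stdG.prod stdG)) (h1 : ∀ x : ℝ × ℝ, |φ (x.1, x.2, 1)| ≤ W x)
    (h2 : ∀ x : ℝ × ℝ, |φ (x.1, x.2, -1)| ≤ W x) :
    Integrable φ (nuM f ρ) ∧ ∫ z, φ z ∂(nuM f ρ) = ∫ x, (f (ρ * x.2) * φ (x.1, x.2, 1)
      + (1 - f (ρ * x.2)) * φ (x.1, x.2, -1)) ∂(stdG.prod stdG) := by
  have m1 : Measurable fun x : ℝ × ℝ => ENNReal.ofReal (f (ρ * x.2)) := by fun_prop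
  have m2 : Measurable fun x : ℝ × ℝ => ENNReal.ofReal (1 - f (ρ * x.2)) := by fun_prop
  have m3 : Measurable fun x : ℝ × ℝ => φ (x.1, x.2, 1) := hφ.comp (by fun_prop)
  have m4 : Measurable fun x : ℝ × ℝ => φ (x.1, x.2, -1) := hφ.comp (by fun_prop)
  have i1 : Integrable (fun x : ℝ × ℝ => φ (x.1, x.2, 1)) (stdG.prod stdG) :=
    hW.mono' m3.aestronglyMeasurable (ae_of_all _ h1)
  have i2 : Integrable (fun x : ℝ × ℝ => φ (x.1, x.2, -1)) (stdG.prod stdG) :=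
    hW.mono' m4.aestronglyMeasurable (ae_of_all _ h2)
  have l1 : (stdG.prod stdG).withDensity (fun x => ENNReal.ofReal (f (ρ * x.2)))
      ≤ stdG.prod stdG := by
    conv_rhs => rw [← withDensity_one (μ := stdG.prod stdG)]
    refine withDensity_mono (ae_of_all _ fun x => ?_)
    simpa using (hf01 (ρ * x.2)).2
  have l2 : (stdG.prod stdG).withDensity (fun x => ENNReal.ofReal (1 - f (ρ * x.2)))
      ≤ stdG.prod stdG := by
    conv_rhs => rw [← withDensity_one (μ := stdG.prod stdG)]
    refine withDensity_mono (ae_of_all _ fun x => ?_)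
    simpa using (hf01 (ρ * x.2)).1
  have j1 : Integrable φ (((stdG.prod stdG).withDensity
      (fun x => ENNReal.ofReal (f (ρ * x.2)))).map (fun x => (x.1, x.2, (1 : ℝ)))) := by
    rw [integrable_map_measure hφ.aestronglyMeasurable (by fun_prop)]
    exact i1.mono_measure l1
  have j2 : Integrable φ (((stdG.prod stdG).withDensity
      (fun x => ENNReal.ofReal (1 - f (ρ * x.2)))).map (fun x => (x.1, x.2, (-1 : ℝ)))) := by
    rw [integrable_map_measure hφ.aestronglyMeasurable (by fun_prop)]
    exact i2.mono_measure l2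
  refine ⟨j1.add_measure j2, ?_⟩
  have mf : Measurable fun x : ℝ × ℝ => f (ρ * x.2) := by fun_prop
  have b1 : ∀ x : ℝ × ℝ, |f (ρ * x.2)| ≤ 1 := fun x =>
    abs_le.2 ⟨by linarith [(hf01 (ρ * x.2)).1], (hf01 (ρ * x.2)).2⟩
  have b2 : ∀ x : ℝ × ℝ, |1 - f (ρ * x.2)| ≤ 1 := fun x =>
    abs_le.2 ⟨by linarith [(hf01 (ρ * x.2)).2], by linarith [(hf01 (ρ * x.2)).1]⟩
  rw [nuM, integral_add_measure j1 j2, integral_map (by fun_prop) hφ.aestronglyMeasurable,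
    integral_map (by fun_prop) hφ.aestronglyMeasurable,
    integral_withDensity_eq_integral_toReal_smul m1 (ae_of_all _ fun _ => ENNReal.ofReal_lt_top),
    integral_withDensity_eq_integral_toReal_smul m2 (ae_of_all _ fun _ => ENNReal.ofReal_lt_top),
    integral_add]
  · congr 1
    · refine integral_congr_ae (ae_of_all _ fun x => ?_)
      simp [ENNReal.toReal_ofReal (hf01 (ρ * x.2)).1]
    · refine integral_congr_ae (ae_of_all _ fun x => ?_)
      simp [ENNReal.toReal_ofReal (sub_nonneg.2 (hf01 (ρ * x.2)).2)]
  · exact i1.bdd_mul mf.aestronglyMeasurable (ae_of_all _ b1)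
  · exact i2.bdd_mul (measurable_const.sub mf).aestronglyMeasurable (ae_of_all _ b2)

lemma lln_tend (f : ℝ → ℝ) (hf : Continuous f) (hf01 : ∀ x, f x ∈ Set.Icc (0:ℝ) 1)
    (ρn : ℕ → ℝ)
    (φ : ℝ × ℝ × ℝ → ℝ) (hφ : Measurable φ) (W : ℝ × ℝ → ℝ)
    (hW2 : Integrable (fun x => W x ^ 2) (stdG.prod stdG))
    (h1 : ∀ x : ℝ × ℝ, |φ (x.1, x.2, 1)| ≤ W x)
    (h2 : ∀ x : ℝ × ℝ, |φ (x.1, x.2, -1)| ≤ W x) (δ : ℝ) (hδ : 0 < δ) :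
    Tendsto (fun n => Measure.pi (fun _ : Fin n => nuM f (ρn n))
      {x | δ ≤ |(∑ i, φ (x i)) / n - ∫ z, φ z ∂(nuM f (ρn n))|}) atTop (𝓝 0) := by
  set K := ∫ x, W x ^ 2 ∂(stdG.prod stdG) with hK
  have hlim : Tendsto (fun n : ℕ => ENNReal.ofReal (K / (n * δ ^ 2))) atTop (𝓝 0) := by
    rw [← ENNReal.ofReal_zero]
    refine ENNReal.tendsto_ofReal ?_
    refine Tendsto.const_div_atTop ?_ K
    exact Tendsto.atTop_mul_const (by positivity) tendsto_natCast_atTop_atTop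
  refine tendsto_of_tendsto_of_tendsto_of_le_of_le' tendsto_const_nhds hlim
    (Eventually.of_forall fun _ => zero_le) ?_
  filter_upwards [eventually_gt_atTop 0] with n hn
  have := isProb_nuM f hf hf01 (ρn n)
  have hsq1 : ∀ x : ℝ × ℝ, |φ (x.1, x.2, 1) ^ 2| ≤ W x ^ 2 := fun x => by
    rw [abs_pow]; exact pow_le_pow_left₀ (abs_nonneg _) (h1 x) 2
  have hsq2 : ∀ x : ℝ × ℝ, |φ (x.1, x.2, -1) ^ 2| ≤ W x ^ 2 := fun x => by
    rw [abs_pow]; exact pow_le_pow_left₀ (abs_nonneg _) (h2 x) 2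
  obtain ⟨I1, I2⟩ := nu_int f hf hf01 (ρn n) (fun z => φ z ^ 2) (hφ.pow_const 2) _ hW2 hsq1 hsq2
  have hm : MemLp φ 2 (nuM f (ρn n)) :=
    (memLp_two_iff_integrable_sq hφ.aestronglyMeasurable).2 I1
  refine (lln (nuM f (ρn n)) φ hm n hn δ hδ).trans (ENNReal.ofReal_le_ofReal ?_)
  refine div_le_div_of_nonneg_right ?_ (by positivity)
  rw [I2]
  refine integral_mono_of_nonneg (ae_of_all _ fun x => ?_) hW2 (ae_of_all _ fun x => ?_)
  · have := hf01 (ρn n * x.2)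
    have a : 0 ≤ f (ρn n * x.2) := this.1
    have b : 0 ≤ 1 - f (ρn n * x.2) := sub_nonneg.2 this.2
    simp only [Pi.zero_apply]
    positivity
  · have := hf01 (ρn n * x.2)
    have e1 := mul_le_mul_of_nonneg_left ((le_abs_self _).trans (hsq1 x)) this.1
    have e2 := mul_le_mul_of_nonneg_left ((le_abs_self _).trans (hsq2 x)) (sub_nonneg.2 this.2)
    simp only
    nlinarith



/-- The squared hinge function of one sample. -/
def phiF (κ : ℝ) (c : ℝ × ℝ) (z : ℝ × ℝ × ℝ) : ℝ :=
  (max (κ - c.1 * (z.2.2 * z.2.1) - c.2 * (z.2.2 * z.1)) 0) ^ 2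

/-- Envelope. -/
def env (κ M : ℝ) (x : ℝ × ℝ) : ℝ := κ + M * |x.1| + M * |x.2|

lemma measurable_phiF (κ : ℝ) (c : ℝ × ℝ) : Measurable (phiF κ c) := by
  unfold phiF; fun_prop

lemma memLp_stdG (q : ENNReal) (hq : q ≠ ⊤) : MemLp (fun x : ℝ => x) q stdG :=
  memLp_id_gaussianReal' q hq

lemma memLp_fst (q : ENNReal) (hq : q ≠ ⊤) :
    MemLp (fun x : ℝ × ℝ => x.1) q (stdG.prod stdG) :=
  (memLp_stdG q hq).comp_measurePreserving measurePreserving_fst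

lemma memLp_snd (q : ENNReal) (hq : q ≠ ⊤) :
    MemLp (fun x : ℝ × ℝ => x.2) q (stdG.prod stdG) :=
  (memLp_stdG q hq).comp_measurePreserving measurePreserving_snd

lemma memLp_env (κ M : ℝ) (q : ENNReal) (hq : q ≠ ⊤) : MemLp (env κ M) q (stdG.prod stdG) :=
  ((memLp_const κ).add ((memLp_fst q hq).abs.const_mul M)).add ((memLp_snd q hq).abs.const_mul M)

lemma env_nonneg (κ M : ℝ) (hκ : 0 ≤ κ) (hM : 0 ≤ M) (x : ℝ × ℝ) : 0 ≤ env κ M x := by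
  unfold env; positivity

lemma integrable_env_pow (κ M : ℝ) (hκ : 0 ≤ κ) (hM : 0 ≤ M) (k : ℕ) (hk : k ≠ 0) :
    Integrable (fun x => env κ M x ^ k) (stdG.prod stdG) := by
  have := (memLp_env κ M k (by simp)).integrable_norm_pow hk
  refine this.congr (ae_of_all _ fun x => ?_)
  simp [Real.norm_eq_abs, abs_of_nonneg (env_nonneg κ M hκ hM x)]

lemma phi_le_env (κ M : ℝ) (hκ : 0 ≤ κ) (hM : 0 ≤ M) (a b : ℝ) (ha : |a| ≤ M) (hb : |b| ≤ M)
    (x : ℝ × ℝ) : |(max (κ - a * x.2 - b * x.1) 0) ^ 2| ≤ env κ M x ^ 2 := by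
  rw [abs_pow]
  refine pow_le_pow_left₀ (abs_nonneg _) ?_ 2
  rw [abs_of_nonneg (le_max_right _ _)]
  refine max_le ?_ (env_nonneg κ M hκ hM x)
  have h1 : |a * x.2| ≤ M * |x.2| := by
    rw [abs_mul]; exact mul_le_mul_of_nonneg_right ha (abs_nonneg _)
  have h2 : |b * x.1| ≤ M * |x.1| := by
    rw [abs_mul]; exact mul_le_mul_of_nonneg_right hb (abs_nonneg _)
  unfold env
  linarith [(abs_le.1 h1).1, (abs_le.1 h2).1]

lemma phiF_bound1 (κ M : ℝ) (hκ : 0 ≤ κ) (hM : 0 ≤ M) (c : ℝ × ℝ) (h1 : |c.1| ≤ M)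
    (h2 : |c.2| ≤ M) (x : ℝ × ℝ) : |phiF κ c (x.1, x.2, 1)| ≤ env κ M x ^ 2 := by
  have := phi_le_env κ M hκ hM c.1 c.2 h1 h2 x
  simpa [phiF] using this

lemma phiF_bound2 (κ M : ℝ) (hκ : 0 ≤ κ) (hM : 0 ≤ M) (c : ℝ × ℝ) (h1 : |c.1| ≤ M)
    (h2 : |c.2| ≤ M) (x : ℝ × ℝ) : |phiF κ c (x.1, x.2, -1)| ≤ env κ M x ^ 2 := by
  have := phi_le_env κ M hκ hM (-c.1) (-c.2) (by simpa using h1) (by simpa using h2) x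
  simpa [phiF] using this

lemma integral_phiF (f : ℝ → ℝ) (hf : Continuous f) (hf01 : ∀ x, f x ∈ Set.Icc (0:ℝ) 1) (ρ : ℝ)
    (κ : ℝ) (hκ : 0 ≤ κ) (c : ℝ × ℝ) :
    ∫ z, phiF κ c z ∂(nuM f ρ) = ∫ x, (f (ρ * x.2) * phiF κ c (x.1, x.2, 1)
      + (1 - f (ρ * x.2)) * phiF κ c (x.1, x.2, -1)) ∂(stdG.prod stdG) := by
  have hM : 0 ≤ max |c.1| |c.2| := le_max_of_le_left (abs_nonneg _)
  exact (nu_int f hf hf01 ρ (phiF κ c) (measurable_phiF κ c) _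
    (integrable_env_pow κ (max |c.1| |c.2|) hκ hM 2 two_ne_zero)
    (phiF_bound1 κ _ hκ hM c (le_max_left _ _) (le_max_right _ _))
    (phiF_bound2 κ _ hκ hM c (le_max_left _ _) (le_max_right _ _))).2

lemma Fk_eq (f : ℝ → ℝ) (hf : Continuous f) (hf01 : ∀ x, f x ∈ Set.Icc (0:ℝ) 1) (ρ : ℝ)
    (κ : ℝ) (hκ : 0 ≤ κ) (c : ℝ × ℝ) :
    Fk (fun x => f (ρ * x)) κ c.1 c.2 = Real.sqrt (∫ z, phiF κ c z ∂(nuM f ρ)) := by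
  unfold Fk
  congr 1
  have hM : 0 ≤ max |c.1| |c.2| := le_max_of_le_left (abs_nonneg _)
  have hE := integrable_env_pow κ (max |c.1| |c.2|) hκ hM 2 two_ne_zero
  have hc1 : |c.1| ≤ max |c.1| |c.2| := le_max_left _ _
  have hc2 : |c.2| ≤ max |c.1| |c.2| := le_max_right _ _
  set M := max |c.1| |c.2|
  have b1 : ∀ x : ℝ × ℝ, |f (ρ * x.2)| ≤ 1 := fun x =>
    abs_le.2 ⟨by linarith [(hf01 (ρ * x.2)).1], (hf01 (ρ * x.2)).2⟩
  have b2 : ∀ x : ℝ × ℝ, |1 - f (ρ * x.2)| ≤ 1 := fun x =>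
    abs_le.2 ⟨by linarith [(hf01 (ρ * x.2)).2], by linarith [(hf01 (ρ * x.2)).1]⟩
  have gen : ∀ a b : ℝ, |a| ≤ M → |b| ≤ M →
      Integrable (fun x : ℝ × ℝ => (max (κ - a * x.2 - b * x.1) 0) ^ 2) (stdG.prod stdG) := by
    intro a b ha hb
    exact hE.mono' (Measurable.aestronglyMeasurable (by fun_prop))
      (ae_of_all _ (phi_le_env κ M hκ hM a b ha hb))
  have mf : Measurable fun x : ℝ × ℝ => f (ρ * x.2) := by fun_prop
  have P1 : Integrable (fun x : ℝ × ℝ => f (ρ * x.2) * (max (κ - c.1 * x.2 - c.2 * x.1) 0) ^ 2)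
      (stdG.prod stdG) :=
    (gen c.1 c.2 hc1 hc2).bdd_mul mf.aestronglyMeasurable (ae_of_all _ b1)
  have P2 : Integrable (fun x : ℝ × ℝ => (1 - f (ρ * x.2)) *
      (max (κ + c.1 * x.2 - c.2 * x.1) 0) ^ 2) (stdG.prod stdG) := by
    have := gen (-c.1) c.2 (by simpa using hc1) hc2
    simp only [neg_mul, sub_neg_eq_add] at this
    exact this.bdd_mul (measurable_const.sub mf).aestronglyMeasurable (ae_of_all _ b2)
  have P3 : Integrable (fun x : ℝ × ℝ => (1 - f (ρ * x.2)) *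
      (max (κ + c.1 * x.2 + c.2 * x.1) 0) ^ 2) (stdG.prod stdG) := by
    have := gen (-c.1) (-c.2) (by simpa using hc1) (by simpa using hc2)
    simp only [neg_mul, sub_neg_eq_add] at this
    exact this.bdd_mul (measurable_const.sub mf).aestronglyMeasurable (ae_of_all _ b2)
  have hneg : MeasurePreserving (Prod.map (fun x : ℝ => -x) (id : ℝ → ℝ))
      (stdG.prod stdG) (stdG.prod stdG) := by
    have h1 : MeasurePreserving (fun x : ℝ => -x) stdG stdG := by
      refine ⟨measurable_neg, ?_⟩
      have := gaussianReal_map_neg (μ := 0) (v := 1)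
      simpa [stdG] using this
    exact h1.prod (MeasurePreserving.id _)
  have P23 : ∫ x : ℝ × ℝ, (1 - f (ρ * x.2)) * (max (κ + c.1 * x.2 - c.2 * x.1) 0) ^ 2
      ∂(stdG.prod stdG) = ∫ x : ℝ × ℝ, (1 - f (ρ * x.2)) *
      (max (κ + c.1 * x.2 + c.2 * x.1) 0) ^ 2 ∂(stdG.prod stdG) := by
    conv_rhs => rw [← hneg.map_eq]
    rw [integral_map hneg.measurable.aemeasurable]
    · refine integral_congr_ae (ae_of_all _ fun x => ?_)
      simp [sub_eq_add_neg]
    · exact Measurable.aestronglyMeasurable (by fun_prop)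
  rw [integral_phiF f hf hf01 ρ κ hκ c]
  have hI := integral_prod_symm _ (P1.add P2)
  simp only [Pi.add_apply] at hI
  rw [← hI, integral_add P1 P2, P23, ← integral_add P1 P3]
  refine integral_congr_ae (ae_of_all _ fun x => ?_)
  simp [phiF]

lemma continuousOn_phi (f : ℝ → ℝ) (hf : Continuous f) (hf01 : ∀ x, f x ∈ Set.Icc (0:ℝ) 1)
    (κ : ℝ) (hκ : 0 ≤ κ) (M : ℝ) (hM : 0 ≤ M) :
    ContinuousOn (fun t : ℝ × ℝ × ℝ => ∫ z, phiF κ t.2 z ∂(nuM f t.1))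
      {t | |t.2.1| ≤ M ∧ |t.2.2| ≤ M} := by
  simp_rw [integral_phiF f hf hf01 _ κ hκ _]
  refine continuousOn_of_dominated (bound := fun x => env κ M x ^ 2) ?_ ?_
    (integrable_env_pow κ M hκ hM 2 two_ne_zero) ?_
  · intro t _
    refine Measurable.aestronglyMeasurable ?_
    unfold phiF; fun_prop
  · intro t ht
    refine ae_of_all _ fun x => ?_
    have e1 := phiF_bound1 κ M hκ hM t.2 ht.1 ht.2 x
    have e2 := phiF_bound2 κ M hκ hM t.2 ht.1 ht.2 x
    have h := hf01 (t.1 * x.2)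
    rw [Real.norm_eq_abs]
    refine (abs_add_le _ _).trans ?_
    rw [abs_mul, abs_mul, abs_of_nonneg h.1, abs_of_nonneg (sub_nonneg.2 h.2)]
    nlinarith [mul_le_mul_of_nonneg_left e1 h.1,
      mul_le_mul_of_nonneg_left e2 (sub_nonneg.2 h.2)]
  · refine ae_of_all _ fun x => Continuous.continuousOn ?_
    unfold phiF; fun_prop

lemma lipschitz_A (κ : ℝ) (n : ℕ) (c c' : ℝ × ℝ) (η : ℝ) (h1 : |c.1 - c'.1| ≤ η)
    (h2 : |c.2 - c'.2| ≤ η) (x : Fin n → ℝ × ℝ × ℝ)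
    (hy : ∀ i, (x i).2.2 = 1 ∨ (x i).2.2 = -1) (L : ℝ) (hL : 0 ≤ L) (hn : 0 < n)
    (hx : (∑ i, ((x i).2.1 ^ 2 + (x i).1 ^ 2)) / n ≤ L) :
    |Real.sqrt ((∑ i, phiF κ c (x i)) / n) - Real.sqrt ((∑ i, phiF κ c' (x i)) / n)|
      ≤ η * Real.sqrt (2 * L) := by
  have hη : 0 ≤ η := (abs_nonneg _).trans h1
  have hn' : (0:ℝ) < n := Nat.cast_pos.2 hn
  have sn : 0 < Real.sqrt n := Real.sqrt_pos.2 hn'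
  have e : ∀ c, Real.sqrt ((∑ i, phiF κ c (x i)) / n) = l2 (fun i =>
      max (κ - c.1 * ((x i).2.2 * (x i).2.1) - c.2 * ((x i).2.2 * (x i).1)) 0) / Real.sqrt n := by
    intro c
    rw [Real.sqrt_div' _ hn'.le]; rfl
  rw [e, e, ← sub_div, abs_div, abs_of_pos sn, div_le_iff₀ sn]
  refine (abs_l2_sub_le _ _).trans ?_
  have e2 : η * Real.sqrt (2 * L) * Real.sqrt n = Real.sqrt (η ^ 2 * (2 * L) * n) := by
    rw [Real.sqrt_mul (x := η ^ 2 * (2 * L)) (by positivity),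
      Real.sqrt_mul (x := η ^ 2) (by positivity), Real.sqrt_sq hη]
  rw [e2]
  refine Real.sqrt_le_sqrt ?_
  rw [div_le_iff₀ hn'] at hx
  calc _ ≤ ∑ i, η ^ 2 * 2 * ((x i).2.1 ^ 2 + (x i).1 ^ 2) := by
        refine Finset.sum_le_sum fun i _ => ?_
        have a1 := abs_max_sub_max_le_abs
          (κ - c.1 * ((x i).2.2 * (x i).2.1) - c.2 * ((x i).2.2 * (x i).1))
          (κ - c'.1 * ((x i).2.2 * (x i).2.1) - c'.2 * ((x i).2.2 * (x i).1)) 0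
        have a2 := sq_le_sq.2 (a1.trans (le_abs_self _))
        rw [sq_abs] at a2
        refine a2.trans ?_
        have y2 : (x i).2.2 ^ 2 = 1 := by rcases hy i with h | h <;> simp [h]
        have d1 : (c.1 - c'.1) ^ 2 ≤ η ^ 2 := sq_le_sq' (abs_le.1 h1).1 (abs_le.1 h1).2
        have d2 : (c.2 - c'.2) ^ 2 ≤ η ^ 2 := sq_le_sq' (abs_le.1 h2).1 (abs_le.1 h2).2
        set y := (x i).2.2
        set u := (x i).2.1
        set h := (x i).1
        have : (κ - c.1 * (y * u) - c.2 * (y * h) - (κ - c'.1 * (y * u) - c'.2 * (y * h))) ^ 2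
            = ((c.1 - c'.1) * u + (c.2 - c'.2) * h) ^ 2 := by
          linear_combination ((c.1 - c'.1) * u + (c.2 - c'.2) * h) ^ 2 * y2
        rw [this]
        nlinarith [sq_nonneg ((c.1 - c'.1) * u - (c.2 - c'.2) * h),
          mul_le_mul_of_nonneg_right d1 (sq_nonneg u), mul_le_mul_of_nonneg_right d2 (sq_nonneg h)]
    _ = η ^ 2 * 2 * ∑ i, ((x i).2.1 ^ 2 + (x i).1 ^ 2) := by rw [Finset.mul_sum]
    _ ≤ η ^ 2 * 2 * (L * n) := mul_le_mul_of_nonneg_left hx (by positivity)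
    _ = η ^ 2 * (2 * L) * n := by ring



lemma abs_sqrt_sub_le (a b : ℝ) (ha : 0 ≤ a) (hb : 0 ≤ b) :
    |Real.sqrt a - Real.sqrt b| ≤ Real.sqrt |a - b| := by
  refine Real.le_sqrt_of_sq_le ?_
  rw [sq_abs]
  have h1 := Real.sq_sqrt ha
  have h2 := Real.sq_sqrt hb
  have h3 := Real.sqrt_nonneg a
  have h4 := Real.sqrt_nonneg b
  rcases le_total (Real.sqrt a) (Real.sqrt b) with h | h
  · refine le_trans ?_ (neg_le_abs _)
    nlinarith
  · refine le_trans ?_ (le_abs_self _)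
    nlinarith

lemma nuM_sign (f : ℝ → ℝ) (hf : Continuous f) (ρ : ℝ) :
    ∀ᵐ z ∂(nuM f ρ), z.2.2 = 1 ∨ z.2.2 = -1 := by
  have hm : MeasurableSet {z : ℝ × ℝ × ℝ | ¬ (z.2.2 = 1 ∨ z.2.2 = -1)} := by measurability
  rw [ae_iff, nuM_apply f hf ρ _ hm]
  refine (lintegral_congr fun x => ?_).trans lintegral_zero
  have hm2 : MeasurableSet {y : ℝ | (x.1, x.2, y) ∈
      {z : ℝ × ℝ × ℝ | ¬ (z.2.2 = 1 ∨ z.2.2 = -1)}} := by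
    have : Measurable fun y : ℝ => (x.1, x.2, y) := by fun_prop
    exact this hm
  simp only [signBer, Measure.add_apply, Measure.smul_apply, smul_eq_mul,
      Measure.dirac_apply' _ hm2]
  simp

lemma key (f : ℝ → ℝ) (hf : Continuous f) (hf01 : ∀ x, f x ∈ Set.Icc (0:ℝ) 1)
    (κ : ℝ) (hκ : 0 ≤ κ) (M : ℝ) (hM : 0 ≤ M) (ρn : ℕ → ℝ) (ρ : ℝ)
    (hρ : Tendsto ρn atTop (𝓝 ρ)) :
    ∃ R L : ℝ, 0 ≤ L ∧ (∀ c₁ c₂ : ℝ, |c₁| ≤ M → |c₂| ≤ M →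
        Fk (fun x => f (ρ * x)) κ c₁ c₂ ≤ R) ∧
      ∀ δ : ℝ, 0 < δ → ∃ B : (n : ℕ) → Set (Fin n → ℝ × ℝ × ℝ), (∀ n, MeasurableSet (B n)) ∧
      Tendsto (fun n => Measure.pi (fun _ : Fin n => nuM f (ρn n)) (B n)) atTop (𝓝 0) ∧
      ∀ᶠ n : ℕ in atTop, 0 < n ∧ ∀ x ∉ B n, (∀ i, (x i).2.2 = 1 ∨ (x i).2.2 = -1) ∧
        (∑ i, ((x i).2.1 ^ 2 + (x i).1 ^ 2)) / n ≤ L ∧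
        ∀ c₁ c₂ : ℝ, |c₁| ≤ M → |c₂| ≤ M →
          |Real.sqrt ((∑ i, phiF κ (c₁, c₂) (x i)) / n) - Fk (fun x => f (ρ * x)) κ c₁ c₂| ≤ δ := by
  set Kc : Set (ℝ × ℝ) := Set.Icc (-M) M ×ˢ Set.Icc (-M) M with hKc
  have hKcomp : IsCompact Kc := isCompact_Icc.prod isCompact_Icc
  have memK : ∀ c : ℝ × ℝ, c ∈ Kc ↔ |c.1| ≤ M ∧ |c.2| ≤ M := by
    intro c; simp only [hKc, Set.mem_prod, Set.mem_Icc, abs_le]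
  obtain ⟨m, hm⟩ : ∃ m : ℝ → ℝ × ℝ → ℝ, ∀ r c, m r c = ∫ z, phiF κ c z ∂(nuM f r) :=
    ⟨_, fun _ _ => rfl⟩
  have mnn : ∀ r c, 0 ≤ m r c := fun r c => by
    rw [hm]; exact integral_nonneg fun z => sq_nonneg _
  have hcont := continuousOn_phi f hf hf01 κ hκ M hM
  simp_rw [← hm] at hcont
  have mcont : ContinuousOn (m ρ) Kc := by
    have : ContinuousOn (fun c : ℝ × ℝ => (ρ, c)) Kc := by fun_prop
    exact ContinuousOn.comp (g := fun t : ℝ × ℝ × ℝ => m t.1 t.2) hcont this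
      fun c hc => (memK c).1 hc
  have Fcont : ContinuousOn (fun c => Real.sqrt (m ρ c)) Kc := mcont.sqrt
  have mlim : ∀ c ∈ Kc, Tendsto (fun n => m (ρn n) c) atTop (𝓝 (m ρ c)) := by
    intro c hc
    have h1 : ContinuousOn (fun r : ℝ => m r c) Set.univ := by
      have : ContinuousOn (fun r : ℝ => (r, c)) Set.univ := by fun_prop
      exact ContinuousOn.comp (g := fun t : ℝ × ℝ × ℝ => m t.1 t.2) hcont this
        fun r _ => (memK c).1 hc
    exact ((continuousOn_univ.1 h1).tendsto ρ).comp hρ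
  obtain ⟨R, hR⟩ := (hKcomp.image_of_continuousOn Fcont).bddAbove
  -- noise level
  set K2 : ℝ := ∫ x : ℝ × ℝ, (x.2 ^ 2 + x.1 ^ 2) ∂(stdG.prod stdG) with hK2
  have K2nn : 0 ≤ K2 := integral_nonneg fun x => by simp only [Pi.zero_apply]; positivity
  refine ⟨R, K2 + 1, by linarith, ?_, ?_⟩
  · intro c₁ c₂ h1 h2
    rw [Fk_eq f hf hf01 ρ κ hκ (c₁, c₂), ← hm]
    exact hR ⟨(c₁, c₂), (memK _).2 ⟨h1, h2⟩, rfl⟩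
  intro δ hδ
  have hq1 : Integrable (fun x : ℝ × ℝ => x.2 ^ 2 + x.1 ^ 2) (stdG.prod stdG) :=
    ((memLp_snd 2 (by simp)).integrable_sq).add ((memLp_fst 2 (by simp)).integrable_sq)
  have hq2 : Integrable (fun x : ℝ × ℝ => (x.2 ^ 2 + x.1 ^ 2) ^ 2) (stdG.prod stdG) := by
    refine (integrable_env_pow 0 1 le_rfl zero_le_one 4 (by norm_num)).mono'
      (Measurable.aestronglyMeasurable (by fun_prop)) (ae_of_all _ fun x => ?_)
    rw [Real.norm_eq_abs, abs_pow, show (4:ℕ) = 2 * 2 from rfl, pow_mul]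
    refine pow_le_pow_left₀ (abs_nonneg _) ?_ 2
    rw [abs_of_nonneg (by positivity)]
    unfold env
    nlinarith [sq_abs x.1, sq_abs x.2, abs_nonneg x.1, abs_nonneg x.2,
      mul_nonneg (abs_nonneg x.1) (abs_nonneg x.2)]
  have qmeas : Measurable fun z : ℝ × ℝ × ℝ => z.2.1 ^ 2 + z.1 ^ 2 := by fun_prop
  have qb1 : ∀ x : ℝ × ℝ, |x.2 ^ 2 + x.1 ^ 2| ≤ x.2 ^ 2 + x.1 ^ 2 := fun x => by
    rw [abs_of_nonneg (by positivity)]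
  have qmean : ∀ r, ∫ z : ℝ × ℝ × ℝ, (z.2.1 ^ 2 + z.1 ^ 2) ∂(nuM f r) = K2 := by
    intro r
    rw [(nu_int f hf hf01 r _ qmeas (fun x : ℝ × ℝ => x.2 ^ 2 + x.1 ^ 2) hq1 qb1 qb1).2, hK2]
    refine integral_congr_ae (ae_of_all _ fun x => ?_)
    simp only
    ring
  have T2 := lln_tend f hf hf01 ρn _ qmeas (fun x : ℝ × ℝ => x.2 ^ 2 + x.1 ^ 2) hq2 qb1 qb1
    1 one_pos
  -- net
  set L := K2 + 1 with hL
  have hLpos : 0 < L := by linarith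
  obtain ⟨η0, hη0, hη0'⟩ := Metric.uniformContinuousOn_iff.1
    (hKcomp.uniformContinuousOn_of_continuous Fcont) (δ / 3) (by positivity)
  have sL : 0 < Real.sqrt (2 * L) := Real.sqrt_pos.2 (by linarith)
  set η := min η0 (δ / 3 / Real.sqrt (2 * L)) with hη
  have ηpos : 0 < η := lt_min hη0 (by positivity)
  obtain ⟨t, htK, htfin, htcov⟩ := hKcomp.finite_cover_balls ηpos
  set τ : ℝ := (δ / 3) ^ 2 / 2 with hτ
  have τpos : 0 < τ := by positivity
  have T3 : ∀ c ∈ t, Tendsto (fun n => Measure.pi (fun _ : Fin n => nuM f (ρn n))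
      {x | τ ≤ |(∑ i, phiF κ c (x i)) / n - m (ρn n) c|}) atTop (𝓝 0) := by
    intro c hc
    have hc' := (memK c).1 (htK hc)
    have hW : Integrable (fun x => (env κ M x ^ 2) ^ 2) (stdG.prod stdG) := by
      simp_rw [← pow_mul]
      exact integrable_env_pow κ M hκ hM 4 (by norm_num)
    simp_rw [hm]
    exact lln_tend f hf hf01 ρn (phiF κ c) (measurable_phiF κ c) _ hW
      (phiF_bound1 κ M hκ hM c hc'.1 hc'.2) (phiF_bound2 κ M hκ hM c hc'.1 hc'.2) τ τpos
  refine ⟨fun n => ({x | ¬ ∀ i, (x i).2.2 = 1 ∨ (x i).2.2 = -1} ∪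
      {x | 1 ≤ |(∑ i, ((x i).2.1 ^ 2 + (x i).1 ^ 2)) / n
        - ∫ z : ℝ × ℝ × ℝ, (z.2.1 ^ 2 + z.1 ^ 2) ∂(nuM f (ρn n))|}) ∪
      ⋃ c ∈ htfin.toFinset, {x | τ ≤ |(∑ i, phiF κ c (x i)) / n - m (ρn n) c|}, ?_, ?_, ?_⟩
  · intro n
    refine MeasurableSet.union (MeasurableSet.union ?_ ?_) ?_
    · refine MeasurableSet.compl (s := {x : Fin n → ℝ × ℝ × ℝ |
        ∀ i, (x i).2.2 = 1 ∨ (x i).2.2 = -1}) ?_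
      simp only [Set.ofPred_forall]
      refine MeasurableSet.iInter fun i => ?_
      have m0 : Measurable fun x : Fin n → ℝ × ℝ × ℝ => (x i).2.2 := by fun_prop
      exact (m0 (measurableSet_singleton 1)).union (m0 (measurableSet_singleton (-1)))
    · exact measurableSet_le measurable_const (by fun_prop)
    · refine Finset.measurableSet_biUnion _ fun c _ => ?_
      have := measurable_phiF κ c
      exact measurableSet_le measurable_const (by fun_prop)
  · have hsum : Tendsto (fun n => (0 + Measure.pi (fun _ : Fin n => nuM f (ρn n))
        {x | 1 ≤ |(∑ i, ((x i).2.1 ^ 2 + (x i).1 ^ 2)) / n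
        - ∫ z : ℝ × ℝ × ℝ, (z.2.1 ^ 2 + z.1 ^ 2) ∂(nuM f (ρn n))|}) +
        ∑ c ∈ htfin.toFinset, Measure.pi (fun _ : Fin n => nuM f (ρn n))
          {x | τ ≤ |(∑ i, phiF κ c (x i)) / n - m (ρn n) c|}) atTop (𝓝 0) := by
      have := (tendsto_const_nhds (x := (0 : ENNReal)) |>.add T2).add
        (tendsto_finsetSum htfin.toFinset fun c hc => T3 c (htfin.mem_toFinset.1 hc))
      simpa using this
    refine tendsto_of_tendsto_of_tendsto_of_le_of_le tendsto_const_nhds hsum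
      (fun _ => zero_le) fun n => ?_
    have := isProb_nuM f hf hf01 (ρn n)
    refine (measure_union_le _ _).trans (add_le_add ((measure_union_le _ _).trans
      (add_le_add ?_ le_rfl)) (measure_biUnion_finset_le _ _))
    have hae : ∀ᵐ x ∂(Measure.pi fun _ : Fin n => nuM f (ρn n)),
        ∀ i, (x i).2.2 = 1 ∨ (x i).2.2 = -1 := by
      rw [ae_all_iff]
      intro i
      exact (Measure.tendsto_eval_ae_ae (μ := fun _ : Fin n => nuM f (ρn n)) (i := i)).eventually
        (nuM_sign f hf (ρn n))
    exact (ae_iff.1 hae).le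
  · have hev : ∀ᶠ n in atTop, ∀ c ∈ t, |m (ρn n) c - m ρ c| < τ := by
      rw [eventually_all_finite htfin]
      intro c hc
      have := Metric.tendsto_nhds.1 (mlim c (htK hc)) τ τpos
      simpa [Real.dist_eq] using this
    filter_upwards [hev, eventually_gt_atTop 0] with n hn hn0
    refine ⟨hn0, fun x hx => ?_⟩
    simp only [Set.mem_union, not_or, Set.mem_iUnion, not_exists, Set.mem_ofPred_eq, not_not,
      not_le, htfin.mem_toFinset, qmean] at hx
    obtain ⟨⟨hx1, hx2⟩, hx3⟩ := hx
    have hx2' : (∑ i, ((x i).2.1 ^ 2 + (x i).1 ^ 2)) / n ≤ L := by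
      have := (abs_lt.1 hx2).2
      linarith
    refine ⟨hx1, hx2', fun c₁ c₂ h1 h2 => ?_⟩
    rw [Fk_eq f hf hf01 ρ κ hκ (c₁, c₂), ← hm]
    have hcK : (c₁, c₂) ∈ Kc := (memK _).2 ⟨h1, h2⟩
    obtain ⟨c', hc't, hball⟩ := Set.mem_iUnion₂.1 (htcov hcK)
    have hd : dist (c₁, c₂) c' < η := hball
    have hd1 : |c₁ - c'.1| ≤ η := by
      have := (le_max_left _ _).trans hd.le
      simpa [Real.dist_eq] using this
    have hd2 : |c₂ - c'.2| ≤ η := by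
      have := (le_max_right _ _).trans hd.le
      simpa [Real.dist_eq] using this
    have s1 := lipschitz_A κ n (c₁, c₂) c' η hd1 hd2 x hx1 L hLpos.le hn0 hx2'
    have s1' : η * Real.sqrt (2 * L) ≤ δ / 3 := by
      have : η ≤ δ / 3 / Real.sqrt (2 * L) := min_le_right _ _
      rwa [le_div_iff₀ sL] at this
    have s2 : |Real.sqrt ((∑ i, phiF κ c' (x i)) / n) - Real.sqrt (m ρ c')| ≤ δ / 3 := by
      refine (abs_sqrt_sub_le _ _ ?_ (mnn _ _)).trans ?_
      · exact div_nonneg (Finset.sum_nonneg fun i _ => sq_nonneg _) (Nat.cast_nonneg _)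
      · rw [← Real.sqrt_sq (show 0 ≤ δ / 3 by positivity)]
        refine Real.sqrt_le_sqrt ?_
        have e1 := hx3 c' hc't
        have e2 := hn c' hc't
        have e3 := abs_sub_le ((∑ i, phiF κ c' (x i)) / n) (m (ρn n) c') (m ρ c')
        have : τ + τ = (δ / 3) ^ 2 := by rw [hτ]; ring
        linarith
    have s3 : |Real.sqrt (m ρ c') - Real.sqrt (m ρ (c₁, c₂))| ≤ δ / 3 := by
      have := hη0' c' (htK hc't) (c₁, c₂) hcK (by
        rw [dist_comm]; exact hd.trans_le (min_le_left _ _))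
      rw [Real.dist_eq] at this
      exact this.le
    have s4 := abs_sub_le (Real.sqrt ((∑ i, phiF κ (c₁, c₂) (x i)) / n))
      (Real.sqrt ((∑ i, phiF κ c' (x i)) / n)) (Real.sqrt (m ρ (c₁, c₂)))
    have s5 := abs_sub_le (Real.sqrt ((∑ i, phiF κ c' (x i)) / n))
      (Real.sqrt (m ρ c')) (Real.sqrt (m ρ (c₁, c₂)))
    linarith

lemma main_aux (ψ : ℝ) (hψ : 0 < ψ) (κ : ℝ) (hκ : 0 ≤ κ)
    (f : ℝ → ℝ) (hf : Continuous f) (hf01 : ∀ x, f x ∈ Set.Icc (0:ℝ) 1)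
    (p : ℕ → ℕ) (hp : Tendsto (fun n => (p n : ℝ) / (n : ℝ)) atTop (nhds ψ))
    (C : ℝ) (hC : 0 ≤ C)
    (Λ : (n : ℕ) → Fin (p n) → ℝ) (hΛ : ∀ n j, 0 ≤ Λ n j ∧ Λ n j ≤ C)
    (ρn : ℕ → ℝ) (ρ : ℝ) (hρlim : Tendsto ρn atTop (nhds ρ))
    (w : (n : ℕ) → Fin (p n) → ℝ) (hw : ∀ n, l2 (w n) = 1)
    (Θ : (n : ℕ) → Set (Fin (p n) → ℝ)) (hΘne : ∀ n, (Θ n).Nonempty)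
    (hΘsub : ∀ n, ∀ θ ∈ Θ n, l2 θ ≤ 1) (ε : ℝ) (hε : 0 < ε) :
      Tendsto (fun n => mu1 n (p n) f (ρn n)
          {q | ε ≤ |xi1 n (p n) κ (Λ n) (w n) (Θ n) q.1 q.2.1 q.2.2.1 q.2.2.2
            - max (xi2 (p n) ψ κ (fun x => f (ρ * x)) (Λ n) (w n) (Θ n) q.1) 0|})
        atTop (nhds 0) := by
  obtain ⟨R, L, hL, hR, hkey⟩ := key f hf hf01 κ hκ (Real.sqrt C) (Real.sqrt_nonneg C) ρn ρ hρlim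
  have sψ : 0 < Real.sqrt ψ := Real.sqrt_pos.2 hψ
  set s := (Real.sqrt ψ)⁻¹ with hs
  have spos : 0 < s := inv_pos.2 sψ
  have hR0 : 0 ≤ R := by
    refine le_trans ?_ (hR 0 0 (by simp) (by simp))
    exact Real.sqrt_nonneg _
  have an : Tendsto (fun n => (Real.sqrt ((p n : ℝ) / n))⁻¹) atTop (𝓝 s) :=
    (hp.sqrt).inv₀ sψ.ne'
  have pinf : Tendsto (fun n => (p n : ℝ)) atTop atTop := by
    have h := hp.pos_mul_atTop hψ (tendsto_natCast_atTop_atTop (R := ℝ))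
    refine h.congr' ?_
    filter_upwards [eventually_gt_atTop 0] with n hn
    have : (n : ℝ) ≠ 0 := by positivity
    field_simp
  have pz : Tendsto (fun n => (Real.sqrt (p n : ℝ))⁻¹ * (2 * Real.sqrt C * Real.sqrt L)) atTop
      (𝓝 0) := by
    have := (tendsto_inv_atTop_zero.comp (tendsto_sqrt_atTop.comp pinf)).mul_const
      (2 * Real.sqrt C * Real.sqrt L)
    simpa using this
  set δ := ε / 4 / (s + 1) with hδ
  have δpos : 0 < δ := by positivity
  obtain ⟨B, hBm, hBt, hB⟩ := hkey δ δpos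
  refine tendsto_of_tendsto_of_tendsto_of_le_of_le' tendsto_const_nhds hBt
    (Eventually.of_forall fun _ => zero_le) ?_
  have ev1 : ∀ᶠ n in atTop, |(Real.sqrt ((p n : ℝ) / n))⁻¹ - s| < min 1 (ε / 4 / (R + 1)) := by
    have := Metric.tendsto_nhds.1 an (min 1 (ε / 4 / (R + 1))) (lt_min one_pos (by positivity))
    simpa [Real.dist_eq] using this
  have ev2 : ∀ᶠ n in atTop, (Real.sqrt (p n : ℝ))⁻¹ * (2 * Real.sqrt C * Real.sqrt L) < ε / 4 :=
    pz.eventually_lt_const (by positivity)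
  filter_upwards [hB, ev1, ev2] with n hn h1 h2
  refine le_trans (measure_mono ?_) (mu1_smp_le n (p n) f hf hf01 (ρn n) (B n) (hBm n))
  intro q hq
  by_contra hqB
  obtain ⟨hn0, hn⟩ := hn
  obtain ⟨g1, g2, g3⟩ := hn (smp n (p n) q) hqB
  have hn' : (0:ℝ) < n := Nat.cast_pos.2 hn0
  have comp := xi_compare n (p n) hn0 ψ κ C L (ε / 2) hκ hC (fun x => f (ρ * x)) (Λ n) (w n)
    (hΛ n) (hw n) (Θ n) (hΘne n) (hΘsub n) q.1 q.2.1 q.2.2.1 q.2.2.2 g1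
    (by rw [div_le_iff₀ hn'] at g2; rw [mul_comm]; exact g2) (by
      intro c₁ c₂ hc1 hc2
      have g := g3 c₁ c₂ hc1 hc2
      have e : (Real.sqrt (p n : ℝ))⁻¹ * l2 (fun i => max (κ - c₁ * (q.2.2.2 i * q.2.2.1 i)
          - c₂ * (q.2.2.2 i * q.2.1 i)) 0) = (Real.sqrt ((p n : ℝ) / n))⁻¹ *
          Real.sqrt ((∑ i, phiF κ (c₁, c₂) (smp n (p n) q i)) / n) := by
        rw [Real.sqrt_div' _ hn'.le, Real.sqrt_div' _ hn'.le]
        have sn : Real.sqrt n ≠ 0 := (Real.sqrt_pos.2 hn').ne'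
        have : l2 (fun i => max (κ - c₁ * (q.2.2.2 i * q.2.2.1 i)
          - c₂ * (q.2.2.2 i * q.2.1 i)) 0) =
          Real.sqrt (∑ i, phiF κ (c₁, c₂) (smp n (p n) q i)) := rfl
        rw [this, inv_div]
        field_simp
      rw [e]
      have hF := hR c₁ c₂ hc1 hc2
      have hF0 : 0 ≤ Fk (fun x => f (ρ * x)) κ c₁ c₂ := Real.sqrt_nonneg _
      set F := Fk (fun x => f (ρ * x)) κ c₁ c₂
      set A := Real.sqrt ((∑ i, phiF κ (c₁, c₂) (smp n (p n) q i)) / n)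
      set a := (Real.sqrt ((p n : ℝ) / n))⁻¹
      have ha0 : 0 ≤ a := inv_nonneg.2 (Real.sqrt_nonneg _)
      have ha1 : a ≤ s + 1 := by
        have := (abs_lt.1 (h1.trans_le (min_le_left _ _))).2
        linarith
      have t1 : a * A - s * F = a * (A - F) + (a - s) * F := by ring
      rw [t1]
      refine (abs_add_le _ _).trans ?_
      rw [abs_mul, abs_mul, abs_of_nonneg ha0, abs_of_nonneg hF0]
      have t2 : a * |A - F| ≤ ε / 4 := by
        calc a * |A - F| ≤ (s + 1) * δ := mul_le_mul ha1 g (abs_nonneg _) (by positivity)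
          _ = ε / 4 := by rw [hδ]; field_simp
      have t3 : |a - s| * F ≤ ε / 4 := by
        calc |a - s| * F ≤ (ε / 4 / (R + 1)) * (R + 1) :=
              mul_le_mul (h1.le.trans (min_le_right _ _)) (by linarith) hF0 (by positivity)
          _ = ε / 4 := by field_simp
      linarith)
  have hq' : ε ≤ _ := hq
  linarith


/-- For every sequence of nonempty compact sets `Θₙ` contained in the unit ball,
`|ξ⁽¹⁾_{n,ψ,κ}(Θₙ) − (ξ⁽²⁾_{n,ψ,κ}(Θₙ))₊| → 0` in probability as `n → ∞`, `p/n → ψ`;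
in particular this holds for the unit ball itself. -/
theorem statement_11 (ψ : ℝ) (hψ : 0 < ψ) (κ : ℝ) (hκ : 0 ≤ κ)
    (f : ℝ → ℝ) (hf : Continuous f) (hf01 : ∀ x, f x ∈ Set.Icc (0:ℝ) 1)
    (p : ℕ → ℕ) (hp : Tendsto (fun n => (p n : ℝ) / (n : ℝ)) atTop (nhds ψ))
    (c C : ℝ) (hc : 0 < c) (hcC : c ≤ C)
    (Λ : (n : ℕ) → Fin (p n) → ℝ) (hΛ : ∀ n j, Λ n j ∈ Set.Icc c C)
    (θs : (n : ℕ) → Fin (p n) → ℝ)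
    (ρn : ℕ → ℝ) (hρn : ∀ n, ρn n = l2 (fun j => Real.sqrt (Λ n j) * θs n j))
    (hρnpos : ∀ n, 0 < ρn n)
    (ρ : ℝ) (hρ : 0 < ρ) (hρlim : Tendsto ρn atTop (nhds ρ))
    (w : (n : ℕ) → Fin (p n) → ℝ)
    (hw : ∀ n j, w n j = Real.sqrt (Λ n j) * θs n j / ρn n)
    (Θ : (n : ℕ) → Set (Fin (p n) → ℝ))
    (hΘc : ∀ n, IsCompact (Θ n)) (hΘne : ∀ n, (Θ n).Nonempty)
    (hΘsub : ∀ n, Θ n ⊆ {θ : Fin (p n) → ℝ | l2 θ ≤ 1}) :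
    (∀ ε : ℝ, 0 < ε →
      Tendsto (fun n => mu1 n (p n) f (ρn n)
          {q | ε ≤ |xi1 n (p n) κ (Λ n) (w n) (Θ n) q.1 q.2.1 q.2.2.1 q.2.2.2
            - max (xi2 (p n) ψ κ (fun x => f (ρ * x)) (Λ n) (w n) (Θ n) q.1) 0|})
        atTop (nhds 0))
    ∧ (∀ ε : ℝ, 0 < ε →
      Tendsto (fun n => mu1 n (p n) f (ρn n)
          {q | ε ≤ |xi1 n (p n) κ (Λ n) (w n) {θ : Fin (p n) → ℝ | l2 θ ≤ 1}
              q.1 q.2.1 q.2.2.1 q.2.2.2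
            - max (xi2 (p n) ψ κ (fun x => f (ρ * x)) (Λ n) (w n)
                {θ : Fin (p n) → ℝ | l2 θ ≤ 1} q.1) 0|})
        atTop (nhds 0)) := by
  have hC : 0 ≤ C := (hc.trans_le hcC).le
  have hΛ' : ∀ n j, 0 ≤ Λ n j ∧ Λ n j ≤ C := fun n j => ⟨hc.le.trans (hΛ n j).1, (hΛ n j).2⟩
  have hw1 : ∀ n, l2 (w n) = 1 := by
    intro n
    have h0 := hρnpos n
    have e : ∑ j, w n j ^ 2 = 1 := by
      simp_rw [hw n, div_pow]
      rw [← Finset.sum_div, ← l2_sq (fun j => Real.sqrt (Λ n j) * θs n j), ← hρn n]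
      exact div_self (by positivity)
    rw [l2, e, Real.sqrt_one]
  refine ⟨fun ε hε => ?_, fun ε hε => ?_⟩
  · exact main_aux ψ hψ κ hκ f hf hf01 p hp C hC Λ hΛ' ρn ρ hρlim w hw1 Θ hΘne
      (fun n θ hθ => hΘsub n hθ) ε hε
  · exact main_aux ψ hψ κ hκ f hf hf01 p hp C hC Λ hΛ' ρn ρ hρlim w hw1
      (fun n => {θ : Fin (p n) → ℝ | l2 θ ≤ 1}) (fun n => ⟨fun _ => 0, by simp [l2]⟩)
      (fun n θ hθ => hθ) ε hε

end MaxMargin
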